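/- arXiv:2004.05290 — 3 statements merged into one kernel-verified Lean document; each statement's English description precedes it below -/
import Mathlib

section
/- Let x_{t+1} = 𝒜 x_t + ℬ u_t, y_t = 𝒞 x_t + 𝒟 u_t be a stable LTI system, in the sense that there exists 𝒫 ≻ 0 with 𝒫 − 𝒜ᵀ𝒫𝒜 ≻ 0. Then for the Robust RNN parameter choice E = 𝒫, P = 𝒫, F = 𝒫𝒜, B₁ = 0, B₂ = 𝒫ℬ, C₁ = 𝒞, D₁₁ = 0, D₁₂ = 𝒟, C₂ = 0, D₂₂ = 0, b = 0 and any diagonal positive definite Λ, LMI (11) holds (so θ ∈ Θ_*), and the resulting Robust RNN produces exactly the same state and output trajectories as the LTI system for every input sequence and every initial condition. -/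
open Matrix

/-- A function `φ : ℝ → ℝ` is slope-restricted on `[0, β]`:
`0 ≤ (φ y − φ x)/(y − x) ≤ β` for all `x ≠ y`. -/
def SlopeRestricted (β : ℝ) (φ : ℝ → ℝ) : Prop :=
  ∀ x y : ℝ, x ≠ y → 0 ≤ (φ y - φ x) / (y - x) ∧ (φ y - φ x) / (y - x) ≤ β

/-- The matrix of LMI (11):
`[[E + Eᵀ − P, −β C₂ᵀ], [−β C₂, 2Λ]] − [Fᵀ; B₁ᵀ] P⁻¹ [Fᵀ; B₁ᵀ]ᵀ`. -/
noncomputable def LMI11 {n q : ℕ} (β : ℝ)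
    (E F : Matrix (Fin n) (Fin n) ℝ) (B₁ : Matrix (Fin n) (Fin q) ℝ)
    (Λ : Matrix (Fin q) (Fin q) ℝ) (C₂ : Matrix (Fin q) (Fin n) ℝ)
    (P : Matrix (Fin n) (Fin n) ℝ) :
    Matrix (Fin n ⊕ Fin q) (Fin n ⊕ Fin q) ℝ :=
  Matrix.fromBlocks (E + Eᵀ - P) ((-β) • C₂ᵀ) ((-β) • C₂) ((2 : ℝ) • Λ)
    - (Matrix.fromRows Fᵀ B₁ᵀ) * P⁻¹ * (Matrix.fromRows Fᵀ B₁ᵀ)ᵀ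

/-- `(x, y)` is a state/output trajectory of the Robust RNN
`x_{t+1} = E⁻¹(F x_t + B₁ Φ(v_t) + B₂ u_t)`, `y_t = C₁ x_t + D₁₁ Φ(v_t) + D₁₂ u_t`,
`v_t = Λ⁻¹(C₂ x_t + b + D₂₂ u_t)`, driven by the input sequence `u`, where `Φ` applies
`φ` elementwise. -/
def IsRobustRNNTraj {n m p q : ℕ} (φ : ℝ → ℝ)
    (E F : Matrix (Fin n) (Fin n) ℝ) (B₁ : Matrix (Fin n) (Fin q) ℝ)
    (B₂ : Matrix (Fin n) (Fin m) ℝ) (C₁ : Matrix (Fin p) (Fin n) ℝ)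
    (D₁₁ : Matrix (Fin p) (Fin q) ℝ) (D₁₂ : Matrix (Fin p) (Fin m) ℝ)
    (Λ : Matrix (Fin q) (Fin q) ℝ) (C₂ : Matrix (Fin q) (Fin n) ℝ)
    (b : Fin q → ℝ) (D₂₂ : Matrix (Fin q) (Fin m) ℝ)
    (u : ℕ → Fin m → ℝ) (x : ℕ → Fin n → ℝ) (y : ℕ → Fin p → ℝ) : Prop :=
  ∀ t : ℕ,
    x (t + 1) = E⁻¹ *ᵥ (F *ᵥ x t
        + B₁ *ᵥ (fun i => φ ((Λ⁻¹ *ᵥ (C₂ *ᵥ x t + b + D₂₂ *ᵥ u t)) i))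
        + B₂ *ᵥ u t) ∧
    y t = C₁ *ᵥ x t
        + D₁₁ *ᵥ (fun i => φ ((Λ⁻¹ *ᵥ (C₂ *ᵥ x t + b + D₂₂ *ᵥ u t)) i))
        + D₁₂ *ᵥ u t

/-- Theorem 3: every stable LTI system is contained in the Robust RNN set `Θ_*`:
the indicated parameter choice satisfies LMI (11) and reproduces the LTI trajectories. -/
theorem stmt_2 {n m p q : ℕ} (β : ℝ) (hβ : 0 < β)
    (φ : ℝ → ℝ) (hφ : SlopeRestricted β φ)
    (𝒜 : Matrix (Fin n) (Fin n) ℝ) (ℬ : Matrix (Fin n) (Fin m) ℝ)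
    (𝒞 : Matrix (Fin p) (Fin n) ℝ) (𝒟 : Matrix (Fin p) (Fin m) ℝ)
    (Pm : Matrix (Fin n) (Fin n) ℝ) (hPm : Pm.PosDef)
    (hstab : (Pm - 𝒜ᵀ * Pm * 𝒜).PosDef)
    (Λ : Matrix (Fin q) (Fin q) ℝ) (hΛdiag : Λ.IsDiag) (hΛpos : Λ.PosDef) :
    (LMI11 β Pm (Pm * 𝒜) (0 : Matrix (Fin n) (Fin q) ℝ) Λ
      (0 : Matrix (Fin q) (Fin n) ℝ) Pm).PosDef ∧
    ∀ (u : ℕ → Fin m → ℝ) (x₀ : Fin n → ℝ)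
      (xR : ℕ → Fin n → ℝ) (yR : ℕ → Fin p → ℝ)
      (xL : ℕ → Fin n → ℝ) (yL : ℕ → Fin p → ℝ),
      xR 0 = x₀ → xL 0 = x₀ →
      IsRobustRNNTraj φ Pm (Pm * 𝒜) (0 : Matrix (Fin n) (Fin q) ℝ) (Pm * ℬ) 𝒞
        (0 : Matrix (Fin p) (Fin q) ℝ) 𝒟 Λ (0 : Matrix (Fin q) (Fin n) ℝ)
        (0 : Fin q → ℝ) (0 : Matrix (Fin q) (Fin m) ℝ) u xR yR →
      (∀ t, xL (t + 1) = 𝒜 *ᵥ xL t + ℬ *ᵥ u t) →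
      (∀ t, yL t = 𝒞 *ᵥ xL t + 𝒟 *ᵥ u t) →
      ∀ t, xR t = xL t ∧ yR t = yL t := by
  have hPT : Pmᵀ = Pm := by
    have h := hPm.isHermitian
    rwa [Matrix.IsHermitian, Matrix.conjTranspose_eq_transpose_of_trivial] at h
  have hdet : IsUnit Pm.det := (Matrix.isUnit_iff_isUnit_det _).1 hPm.isUnit
  have hinv : Pm⁻¹ * Pm = 1 := Matrix.nonsing_inv_mul _ hdet
  constructor
  · have key : LMI11 β Pm (Pm * 𝒜) (0 : Matrix (Fin n) (Fin q) ℝ) Λ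
        (0 : Matrix (Fin q) (Fin n) ℝ) Pm
        = Matrix.fromBlocks (Pm - 𝒜ᵀ * Pm * 𝒜) 0 0 ((2 : ℝ) • Λ) := by
      have h1 : 𝒜ᵀ * Pm * Pm⁻¹ * (Pm * 𝒜) = 𝒜ᵀ * Pm * 𝒜 := by
        rw [Matrix.mul_assoc (𝒜ᵀ * Pm), ← Matrix.mul_assoc Pm⁻¹, hinv, Matrix.one_mul]
      unfold LMI11
      rw [Matrix.transpose_fromRows, Matrix.fromRows_mul, Matrix.fromRows_mul_fromCols]
      simp only [Matrix.transpose_transpose, Matrix.transpose_mul, hPT, Matrix.transpose_zero,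
        Matrix.zero_mul, Matrix.mul_zero, smul_zero, h1]
      rw [sub_eq_add_neg, Matrix.fromBlocks_neg, Matrix.fromBlocks_add]
      simp [sub_eq_add_neg]
    rw [key]
    have h2 : ((2 : ℝ) • Λ).PosDef := hΛpos.smul (by norm_num)
    refine Matrix.PosDef.of_dotProduct_mulVec_pos ?_ ?_
    · exact Matrix.IsHermitian.fromBlocks hstab.isHermitian (by simp) h2.isHermitian
    · intro z hz
      have hz' : z = Sum.elim (z ∘ Sum.inl) (z ∘ Sum.inr) := (Sum.elim_comp_inl_inr z).symm
      generalize z ∘ Sum.inl = a at hz'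
      generalize z ∘ Sum.inr = c at hz'
      subst hz'
      have e : star (Sum.elim a c) ⬝ᵥ
          (Matrix.fromBlocks (Pm - 𝒜ᵀ * Pm * 𝒜) 0 0 ((2 : ℝ) • Λ) *ᵥ Sum.elim a c)
          = star a ⬝ᵥ ((Pm - 𝒜ᵀ * Pm * 𝒜) *ᵥ a) + star c ⬝ᵥ (((2 : ℝ) • Λ) *ᵥ c) := by
        rw [Matrix.fromBlocks_mulVec]
        simp [dotProduct, Fintype.sum_sum_type]
      rw [e]
      by_cases ha : a = 0
      · have hc : c ≠ 0 := by
          rintro rfl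
          apply hz
          subst ha
          ext i
          cases i <;> rfl
        exact add_pos_of_nonneg_of_pos (hstab.posSemidef.dotProduct_mulVec_nonneg a)
          (h2.dotProduct_mulVec_pos hc)
      · exact add_pos_of_pos_of_nonneg (hstab.dotProduct_mulVec_pos ha)
          (h2.posSemidef.dotProduct_mulVec_nonneg c)
  · intro u x₀ xR yR xL yL hR0 hL0 hR hLx hLy
    have hx : ∀ t, xR t = xL t := by
      intro t
      induction t with
      | zero => rw [hR0, hL0]
      | succ t ih =>
        rw [(hR t).1, hLx t, ih, Matrix.zero_mulVec, add_zero, Matrix.mulVec_add,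
          Matrix.mulVec_mulVec, Matrix.mulVec_mulVec, ← Matrix.mul_assoc, ← Matrix.mul_assoc,
          hinv, Matrix.one_mul, Matrix.one_mul]
    intro t
    refine ⟨hx t, ?_⟩
    rw [(hR t).2, hLy t, hx t, Matrix.zero_mulVec _, add_zero]
end

section
/- Let a contracting implicit RNN (ci-RNN) be given by ℰ z_{t+1} = Φ(ℱ z_t + ℬ u_t + 𝔟), y_t = 𝒞 z_t + 𝒟 u_t, where φ is slope-restricted on [0, 1], ℰ, ℱ ∈ ℝ^{q×q}, and there exists a diagonal positive definite 𝒫 ∈ ℝ^{q×q} satisfying the contraction condition that the block matrix [[ℰ + ℰᵀ − 𝒫, ℱᵀ], [ℱ, 𝒫]] is positive definite. Then the Robust RNN parameter choice E = ℰ, F = 0, B₁ = I, B₂ = 0, C₁ = 𝒞, D₁₁ = 0, D₁₂ = 𝒟, Λ = 𝒫⁻¹, C₂ = 𝒫⁻¹ℱ, D₂₂ = 𝒫⁻¹ℬ, b = 𝒫⁻¹𝔟, P = 𝒫 satisfies LMI (11) with β = 1 (so θ ∈ Θ_*), and the resulting Robust RNN has exactly the same state and output trajectories as the ci-RNN for every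 input sequence and initial condition. -/
open Matrix

/-- Theorem 4: every contracting implicit RNN (ci-RNN) is contained in the Robust RNN
set `Θ_*`: the indicated parameter choice satisfies LMI (11) with `β = 1` and reproduces
the ci-RNN trajectories. -/
theorem stmt_3 {m p q : ℕ}
    (φ : ℝ → ℝ) (hφ : SlopeRestricted 1 φ)
    (ℰ ℱ : Matrix (Fin q) (Fin q) ℝ) (ℬ : Matrix (Fin q) (Fin m) ℝ)
    (𝔟 : Fin q → ℝ) (𝒞 : Matrix (Fin p) (Fin q) ℝ) (𝒟 : Matrix (Fin p) (Fin m) ℝ)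
    (Pm : Matrix (Fin q) (Fin q) ℝ) (hPmdiag : Pm.IsDiag) (hPmpos : Pm.PosDef)
    (hcontr : (Matrix.fromBlocks (ℰ + ℰᵀ - Pm) ℱᵀ ℱ Pm).PosDef) :
    (LMI11 1 ℰ (0 : Matrix (Fin q) (Fin q) ℝ) (1 : Matrix (Fin q) (Fin q) ℝ)
      Pm⁻¹ (Pm⁻¹ * ℱ) Pm).PosDef ∧
    ∀ (u : ℕ → Fin m → ℝ) (z : ℕ → Fin q → ℝ) (y : ℕ → Fin p → ℝ)
      (x : ℕ → Fin q → ℝ) (yR : ℕ → Fin p → ℝ),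
      (∀ t, ℰ *ᵥ z (t + 1) = fun i => φ ((ℱ *ᵥ z t + ℬ *ᵥ u t + 𝔟) i)) →
      (∀ t, y t = 𝒞 *ᵥ z t + 𝒟 *ᵥ u t) →
      x 0 = z 0 →
      IsRobustRNNTraj φ ℰ (0 : Matrix (Fin q) (Fin q) ℝ)
        (1 : Matrix (Fin q) (Fin q) ℝ) (0 : Matrix (Fin q) (Fin m) ℝ) 𝒞
        (0 : Matrix (Fin p) (Fin q) ℝ) 𝒟 Pm⁻¹ (Pm⁻¹ * ℱ) (Pm⁻¹ *ᵥ 𝔟) (Pm⁻¹ * ℬ)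
        u x yR →
      ∀ t, x t = z t ∧ yR t = y t := by
  have hPu : IsUnit Pm.det := hPmpos.isUnit.map Matrix.detMonoidHom
  have hPt : Pmᵀ = Pm := by simpa using hPmpos.isHermitian.eq
  have hPit : (Pm⁻¹)ᵀ = Pm⁻¹ := by rw [Matrix.transpose_nonsing_inv, hPt]
  have hEE : (ℰ + ℰᵀ - Pm).PosDef := by
    have h := hcontr.submatrix (e := (Sum.inl : Fin q → Fin q ⊕ Fin q)) Sum.inl_injective
    exact h
  have hEu : IsUnit ℰ := by
    rw [← Matrix.mulVec_injective_iff_isUnit]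
    have hlin : ∀ v, ℰ *ᵥ v = 0 → v = 0 := by
      intro v hv
      by_contra hne
      have h1 := (hEE.add hPmpos).dotProduct_mulVec_pos hne
      rw [sub_add_cancel, Matrix.add_mulVec, hv, zero_add, Matrix.mulVec_transpose,
        dotProduct_comm, ← Matrix.dotProduct_mulVec] at h1
      simp [hv] at h1
    intro a b hab
    have : ℰ *ᵥ (a - b) = 0 := by
      rw [Matrix.mulVec_sub]; exact sub_eq_zero.2 hab
    exact sub_eq_zero.1 (hlin _ this)
  refine ⟨?_, ?_⟩
  · have hT : IsUnit (Matrix.fromBlocks (1 : Matrix (Fin q) (Fin q) ℝ) 0 0 (-Pm⁻¹)) := by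
      rw [Matrix.isUnit_iff_isUnit_det, Matrix.det_fromBlocks_zero₂₁, Matrix.det_one, one_mul,
        ← Matrix.isUnit_iff_isUnit_det]
      exact ((Matrix.isUnit_iff_isUnit_det _).2 (Matrix.isUnit_nonsing_inv_det _ hPu)).neg
    have h := hcontr.conjTranspose_mul_mul_same (B := Matrix.fromBlocks 1 0 0 (-Pm⁻¹))
      (Matrix.mulVec_injective_of_isUnit hT)
    convert h using 1
    simp only [LMI11, Matrix.conjTranspose_eq_transpose_of_trivial, Matrix.fromBlocks_transpose,
      Matrix.fromBlocks_multiply, Matrix.transpose_fromRows]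
    simp [Matrix.fromRows_mul, Matrix.fromRows_mul_fromCols, hPit, Matrix.nonsing_inv_mul _ hPu]
    ext (i | i) (j | j) <;> simp [Matrix.fromBlocks, two_mul] 
  · intro u z y x yR hz hy h0 hR
    have key : ∀ t, x t = z t := by
      intro t
      induction t with
      | zero => exact h0
      | succ t ih =>
        rw [(hR t).1, ih]
        have e : Pm⁻¹⁻¹ *ᵥ ((Pm⁻¹ * ℱ) *ᵥ z t + Pm⁻¹ *ᵥ 𝔟 + (Pm⁻¹ * ℬ) *ᵥ u t)
            = ℱ *ᵥ z t + ℬ *ᵥ u t + 𝔟 := by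
          rw [Matrix.nonsing_inv_nonsing_inv _ hPu, ← Matrix.mulVec_mulVec,
            ← Matrix.mulVec_mulVec, ← Matrix.mulVec_add, ← Matrix.mulVec_add,
            Matrix.mulVec_mulVec, Matrix.mul_nonsing_inv _ hPu, Matrix.one_mulVec]
          abel
        rw [e, Matrix.zero_mulVec, Matrix.zero_mulVec, Matrix.one_mulVec, zero_add, add_zero,
          ← hz t, Matrix.mulVec_mulVec,
          Matrix.nonsing_inv_mul _ ((Matrix.isUnit_iff_isUnit_det _).1 hEu), Matrix.one_mulVec]
    intro t
    refine ⟨key t, ?_⟩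
    rw [(hR t).2, hy t, key t, Matrix.zero_mulVec, add_zero]
end

section
/- Suppose φ : ℝ → ℝ is slope-restricted on [0, β], Λ ∈ ℝ^{q×q} is diagonal positive definite, P ∈ ℝ^{n×n} is positive definite, and LMI (11) holds. Then there exists α ∈ (0, 1) such that for any two state trajectories x^a, x^b of the Robust RNN driven by the same input sequence u (from possibly different initial conditions), the storage function V_t = (x^a_t − x^b_t)ᵀ Eᵀ P⁻¹ E (x^a_t − x^b_t) satisfies V_{t+1} ≤ α V_t for all t ∈ ℕ; i.e., the dynamics are contracting, with V_t ≤ α^t V₀. -/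
open Matrix

theorem aux_bound {ι : Type*} [Fintype ι] (M N : Matrix ι ι ℝ) (hM : M.PosDef) :
    ∃ K : ℝ, 2 ≤ K ∧ ∀ z : ι → ℝ, z ⬝ᵥ (N *ᵥ z) ≤ K * (z ⬝ᵥ (M *ᵥ z)) := by
  have hpos : ∀ z : ι → ℝ, z ≠ 0 → 0 < z ⬝ᵥ (M *ᵥ z) := by
    intro z hz
    simpa using hM.dotProduct_mulVec_pos hz
  have hcont : ContinuousOn (fun z : ι → ℝ => (z ⬝ᵥ (N *ᵥ z)) / (z ⬝ᵥ (M *ᵥ z)))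
      (Metric.sphere (0 : ι → ℝ) 1) := by
    apply ContinuousOn.div
    · exact Continuous.continuousOn (by fun_prop)
    · exact Continuous.continuousOn (by fun_prop)
    · intro z hz
      have : z ≠ 0 := by
        rintro rfl
        simp at hz
      exact (hpos z this).ne'
  obtain ⟨K, hK⟩ := (isCompact_sphere (0 : ι → ℝ) 1).bddAbove_image hcont
  refine ⟨max K 2, le_max_right _ _, fun z => ?_⟩
  by_cases hz : z = 0
  · subst hz; simp
  have hn : 0 < ‖z‖ := norm_pos_iff.mpr hz
  set y : ι → ℝ := ‖z‖⁻¹ • z with hy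
  have hzy : z = ‖z‖ • y := by
    rw [hy, smul_smul, mul_inv_cancel₀ hn.ne', one_smul]
  have hys : y ∈ Metric.sphere (0 : ι → ℝ) 1 := by
    simp [hy, norm_smul, hn.ne']
  have hy0 : y ≠ 0 := by
    intro h
    rw [h] at hys
    simp at hys
  have h1 : (y ⬝ᵥ (N *ᵥ y)) / (y ⬝ᵥ (M *ᵥ y)) ≤ K := hK ⟨y, hys, rfl⟩
  have h2 : y ⬝ᵥ (N *ᵥ y) ≤ K * (y ⬝ᵥ (M *ᵥ y)) := (div_le_iff₀ (hpos y hy0)).1 h1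
  have h3 : y ⬝ᵥ (N *ᵥ y) ≤ max K 2 * (y ⬝ᵥ (M *ᵥ y)) :=
    h2.trans (mul_le_mul_of_nonneg_right (le_max_left _ _) (hpos y hy0).le)
  have e : ∀ A : Matrix ι ι ℝ, z ⬝ᵥ (A *ᵥ z) = ‖z‖ ^ 2 * (y ⬝ᵥ (A *ᵥ y)) := by
    intro A
    conv_lhs => rw [hzy]
    simp only [mulVec_smul, dotProduct_smul, smul_dotProduct, smul_eq_mul]
    ring
  rw [e N, e M]
  nlinarith [sq_nonneg ‖z‖]

theorem aux_quad {n q : ℕ} (β : ℝ)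
    (E F : Matrix (Fin n) (Fin n) ℝ) (B₁ : Matrix (Fin n) (Fin q) ℝ)
    (Λ : Matrix (Fin q) (Fin q) ℝ) (C₂ : Matrix (Fin q) (Fin n) ℝ)
    (P : Matrix (Fin n) (Fin n) ℝ) (d : Fin n → ℝ) (w : Fin q → ℝ) :
    (Sum.elim d w) ⬝ᵥ (LMI11 β E F B₁ Λ C₂ P *ᵥ (Sum.elim d w)) =
      2 * (d ⬝ᵥ (E *ᵥ d)) - d ⬝ᵥ (P *ᵥ d) - 2 * β * (w ⬝ᵥ (C₂ *ᵥ d))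
        + 2 * (w ⬝ᵥ (Λ *ᵥ w))
        - (F *ᵥ d + B₁ *ᵥ w) ⬝ᵥ (P⁻¹ *ᵥ (F *ᵥ d + B₁ *ᵥ w)) := by
  have t : ∀ {a c : ℕ} (A : Matrix (Fin a) (Fin c) ℝ) (x : Fin c → ℝ) (y : Fin a → ℝ),
      x ⬝ᵥ (Aᵀ *ᵥ y) = (A *ᵥ x) ⬝ᵥ y := by
    intro a c A x y
    rw [mulVec_transpose, dotProduct_comm, ← dotProduct_mulVec, dotProduct_comm]
  unfold LMI11
  rw [sub_mulVec, dotProduct_sub, ← mulVec_mulVec, ← mulVec_mulVec, transpose_fromRows,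
    fromBlocks_mulVec, fromCols_mulVec, fromRows_mulVec]
  simp only [Sum.elim_comp_inl, Sum.elim_comp_inr, sumElim_dotProduct_sumElim, transpose_transpose,
    sub_mulVec, add_mulVec, smul_mulVec, dotProduct_add, dotProduct_sub, dotProduct_smul, t,
    smul_eq_mul, add_dotProduct]
  rw [dotProduct_comm (E *ᵥ d) d, dotProduct_comm (C₂ *ᵥ d) w]
  ring

theorem aux_young {n : ℕ} (E P : Matrix (Fin n) (Fin n) ℝ) (hP : P.PosDef) (d : Fin n → ℝ) :
    2 * (d ⬝ᵥ (E *ᵥ d)) - d ⬝ᵥ (P *ᵥ d) ≤ (E *ᵥ d) ⬝ᵥ (P⁻¹ *ᵥ (E *ᵥ d)) := by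
  have hu : IsUnit P.det := (Matrix.isUnit_iff_isUnit_det _).1 hP.isUnit
  have h := hP.posSemidef.dotProduct_mulVec_nonneg (P⁻¹ *ᵥ (E *ᵥ d) - d)
  have hPt : Pᵀ = P := by simpa using hP.isHermitian.eq
  have hs : (P⁻¹ *ᵥ (E *ᵥ d)) ⬝ᵥ (P *ᵥ d) = d ⬝ᵥ (E *ᵥ d) := by
    rw [dotProduct_mulVec, ← mulVec_transpose, hPt, mulVec_mulVec, mul_nonsing_inv _ hu,
      one_mulVec, dotProduct_comm]
  simp only [star_trivial, mulVec_sub, sub_dotProduct, dotProduct_sub, hs] at h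
  rw [mulVec_mulVec (E *ᵥ d) P P⁻¹, mul_nonsing_inv _ hu, one_mulVec,
    dotProduct_comm (P⁻¹ *ᵥ (E *ᵥ d))] at h
  linarith

theorem aux_sector {β : ℝ} {φ : ℝ → ℝ} (hφ : SlopeRestricted β φ) (x y : ℝ) :
    0 ≤ (φ y - φ x) * (β * (y - x) - (φ y - φ x)) := by
  by_cases h : x = y
  · subst h; simp
  obtain ⟨h1, h2⟩ := hφ x y h
  have h0 : y - x ≠ 0 := sub_ne_zero.2 (Ne.symm h)
  have e : φ y - φ x = (φ y - φ x) / (y - x) * (y - x) := by field_simp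
  set s := (φ y - φ x) / (y - x)
  rw [e]
  have : s * (y - x) * (β * (y - x) - s * (y - x)) = s * (β - s) * (y - x) ^ 2 := by ring
  rw [this]
  have := sub_nonneg.2 h2
  positivity

theorem aux_E {n q : ℕ} (β : ℝ)
    (E F : Matrix (Fin n) (Fin n) ℝ) (B₁ : Matrix (Fin n) (Fin q) ℝ)
    (Λ : Matrix (Fin q) (Fin q) ℝ) (C₂ : Matrix (Fin q) (Fin n) ℝ)
    (P : Matrix (Fin n) (Fin n) ℝ) (hP : P.PosDef)
    (hLMI : (LMI11 β E F B₁ Λ C₂ P).PosDef) : IsUnit E.det := by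
  rw [← Matrix.isUnit_iff_isUnit_det, ← Matrix.mulVec_injective_iff_isUnit]
  have key : ∀ d : Fin n → ℝ, E *ᵥ d = 0 → d = 0 := by
    intro d hd
    by_contra hne
    have hz : (Sum.elim d (0 : Fin q → ℝ)) ≠ 0 := by
      intro h
      apply hne
      funext i
      exact congrFun h (Sum.inl i)
    have h := hLMI.dotProduct_mulVec_pos hz
    rw [star_trivial, aux_quad, hd] at h
    have h1 := hP.posSemidef.dotProduct_mulVec_nonneg d
    have h2 := hP.inv.posSemidef.dotProduct_mulVec_nonneg (F *ᵥ d + B₁ *ᵥ (0 : Fin q → ℝ))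
    rw [star_trivial] at h1 h2
    simp only [dotProduct_zero, zero_dotProduct] at h
    linarith
  intro a b hab
  have := key (a - b) (by rw [mulVec_sub]; exact sub_eq_zero.2 hab)
  exact sub_eq_zero.1 this

theorem aux_V {n : ℕ} (E P : Matrix (Fin n) (Fin n) ℝ) (d : Fin n → ℝ) :
    d ⬝ᵥ ((Eᵀ * P⁻¹ * E) *ᵥ d) = (E *ᵥ d) ⬝ᵥ (P⁻¹ *ᵥ (E *ᵥ d)) := by
  rw [← mulVec_mulVec, ← mulVec_mulVec, mulVec_transpose, dotProduct_comm,
    ← dotProduct_mulVec, dotProduct_comm]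

/-- Remark 1: LMI (11) implies the Robust RNN dynamics are contracting: there is
`α ∈ (0,1)` with `V_{t+1} ≤ α V_t` for the incremental storage function
`V_t = (xᵃ_t − xᵇ_t)ᵀ Eᵀ P⁻¹ E (xᵃ_t − xᵇ_t)`, for any two trajectories driven by
the same input. -/
theorem stmt_10 {n m p q : ℕ} (β : ℝ) (hβ : 0 < β)
    (φ : ℝ → ℝ) (hφ : SlopeRestricted β φ)
    (E F : Matrix (Fin n) (Fin n) ℝ) (B₁ : Matrix (Fin n) (Fin q) ℝ)
    (B₂ : Matrix (Fin n) (Fin m) ℝ) (C₁ : Matrix (Fin p) (Fin n) ℝ)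
    (D₁₁ : Matrix (Fin p) (Fin q) ℝ) (D₁₂ : Matrix (Fin p) (Fin m) ℝ)
    (Λ : Matrix (Fin q) (Fin q) ℝ) (C₂ : Matrix (Fin q) (Fin n) ℝ)
    (b : Fin q → ℝ) (D₂₂ : Matrix (Fin q) (Fin m) ℝ)
    (P : Matrix (Fin n) (Fin n) ℝ)
    (hΛdiag : Λ.IsDiag) (hΛpos : Λ.PosDef) (hP : P.PosDef)
    (hLMI : (LMI11 β E F B₁ Λ C₂ P).PosDef) :
    ∃ α : ℝ, 0 < α ∧ α < 1 ∧
      ∀ (u : ℕ → Fin m → ℝ) (xa xb : ℕ → Fin n → ℝ) (ya yb : ℕ → Fin p → ℝ),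
        IsRobustRNNTraj φ E F B₁ B₂ C₁ D₁₁ D₁₂ Λ C₂ b D₂₂ u xa ya →
        IsRobustRNNTraj φ E F B₁ B₂ C₁ D₁₁ D₁₂ Λ C₂ b D₂₂ u xb yb →
        (∀ t : ℕ,
          (xa (t + 1) - xb (t + 1)) ⬝ᵥ ((Eᵀ * P⁻¹ * E) *ᵥ (xa (t + 1) - xb (t + 1)))
            ≤ α * ((xa t - xb t) ⬝ᵥ ((Eᵀ * P⁻¹ * E) *ᵥ (xa t - xb t)))) ∧
        (∀ t : ℕ,
          (xa t - xb t) ⬝ᵥ ((Eᵀ * P⁻¹ * E) *ᵥ (xa t - xb t))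
            ≤ α ^ t * ((xa 0 - xb 0) ⬝ᵥ ((Eᵀ * P⁻¹ * E) *ᵥ (xa 0 - xb 0)))) := by
  have hE := aux_E β E F B₁ Λ C₂ P hP hLMI
  have hΛu : IsUnit Λ.det := (Matrix.isUnit_iff_isUnit_det _).1 hΛpos.isUnit
  obtain ⟨K, hK2, hK⟩ := aux_bound _ (fromBlocks (Eᵀ * P⁻¹ * E) 0 0 (0 : Matrix (Fin q) (Fin q) ℝ))
    hLMI
  have hK0 : 0 < K := by linarith
  have hinv : K⁻¹ ≤ 2⁻¹ := inv_anti₀ (by norm_num) hK2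
  have hinv0 : 0 < K⁻¹ := inv_pos.2 hK0
  have hα : 0 < 1 - K⁻¹ := by norm_num at hinv; linarith
  refine ⟨1 - K⁻¹, hα, by linarith, ?_⟩
  intro u xa xb ya yb ha hb
  have step : ∀ t : ℕ,
      (xa (t + 1) - xb (t + 1)) ⬝ᵥ ((Eᵀ * P⁻¹ * E) *ᵥ (xa (t + 1) - xb (t + 1)))
        ≤ (1 - K⁻¹) * ((xa t - xb t) ⬝ᵥ ((Eᵀ * P⁻¹ * E) *ᵥ (xa t - xb t))) := by
    intro t
    have hxa := (ha t).1
    have hxb := (hb t).1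
    set va := Λ⁻¹ *ᵥ (C₂ *ᵥ xa t + b + D₂₂ *ᵥ u t) with hva
    set vb := Λ⁻¹ *ᵥ (C₂ *ᵥ xb t + b + D₂₂ *ᵥ u t) with hvb
    set d := xa t - xb t with hd
    set w : Fin q → ℝ := (fun i => φ (va i)) - (fun i => φ (vb i)) with hw
    have hEd : E *ᵥ (xa (t + 1) - xb (t + 1)) = F *ᵥ d + B₁ *ᵥ w := by
      rw [hxa, hxb, mulVec_sub, mulVec_mulVec, mulVec_mulVec, mul_nonsing_inv _ hE,
        one_mulVec, one_mulVec, hd, hw, mulVec_sub, mulVec_sub]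
      abel
    have hv : Λ *ᵥ (va - vb) = C₂ *ᵥ d := by
      rw [hva, hvb, mulVec_sub, mulVec_mulVec, mulVec_mulVec, mul_nonsing_inv _ hΛu,
        one_mulVec, one_mulVec, hd, mulVec_sub]
      abel
    have hsec : 0 ≤ β * (w ⬝ᵥ (C₂ *ᵥ d)) - w ⬝ᵥ (Λ *ᵥ w) := by
      rw [← hv, ← hΛdiag.diagonal_diag]
      simp only [dotProduct, mulVec_diagonal, Finset.mul_sum, ← Finset.sum_sub_distrib]
      apply Finset.sum_nonneg
      intro i _
      have h1 := aux_sector hφ (vb i) (va i)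
      have h2 : 0 < Λ.diag i := hΛpos.diag_pos
      have h3 := mul_nonneg h2.le h1
      simp only [hw, Pi.sub_apply]
      linarith
    have hquad := aux_quad β E F B₁ Λ C₂ P d w
    have hyoung := aux_young E P hP d
    have hKz := hK (Sum.elim d w)
    rw [fromBlocks_mulVec] at hKz
    simp only [Sum.elim_comp_inl, Sum.elim_comp_inr, sumElim_dotProduct_sumElim, zero_mulVec,
      add_zero, dotProduct_zero] at hKz
    rw [aux_V E P (xa (t + 1) - xb (t + 1)), hEd]
    rw [← aux_V] at hyoung
    have h4 := mul_le_mul_of_nonneg_left hKz hinv0.le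
    rw [← mul_assoc, inv_mul_cancel₀ hK0.ne', one_mul] at h4
    linarith
  refine ⟨step, ?_⟩
  intro t
  induction t with
  | zero => simp
  | succ k ih =>
    refine (step k).trans ?_
    rw [pow_succ', mul_assoc (1 - K⁻¹)]
    exact mul_le_mul_of_nonneg_left ih hα.le
end
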